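/- Let A ∈ ℝ^{n×n} be symmetric positive semidefinite. Then for any p-dimensional subspace W of ℝⁿ (1 ≤ p ≤ n) there exists a continuous path t ∈ [0,1] ↦ W_t ∈ G(p,n) (continuity measured via the orthogonal projections P_{W_t}) such that W₀ = W, W₁ maximizes f(V) = tr(A P_V) over G(p,n), and the function t ↦ f(W_t) is non-decreasing. -/

import Mathlib

open Matrix

/-! Let `V` be spanned by top eigenvectors of the symmetric part of `A`, with `dim V = dim W`, and
let `v i`, `w i` be principal vectors of `V` and `W`: orthonormal bases with `P_V (w i) = c i • v i`
and `0 ≤ c i`. The points `(1 - t) • w i + t • v i` remain nonzero and orthogonal to each other, so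
they span subspaces `W_t` joining `W` to `V`, and `tr (A P_{W_t})` is the sum of their Rayleigh
quotients. As `t` grows, each point turns away from `Vᗮ` towards `v i`, where the form of `A` is
larger, so each Rayleigh quotient increases. Since every `W` of that dimension is joined to the same
`V` by such a path, `V` is a maximizer. -/

open Module Submodule InnerProductSpace RCLike
open AffineMap (lineMap)
open Set (Icc)

section InnerProductSpace

variable {𝕜 E F ι : Type*} [RCLike 𝕜] [NormedAddCommGroup E] [InnerProductSpace 𝕜 E]
  [NormedAddCommGroup F] [InnerProductSpace 𝕜 F]

theorem exists_orthonormalBasis_map_eq_smul [FiniteDimensional 𝕜 E] [FiniteDimensional 𝕜 F]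
    {k : ℕ} (hE : finrank 𝕜 E = k) (hF : finrank 𝕜 F = k) (S : E →ₗ[𝕜] F) :
    ∃ (b : OrthonormalBasis (Fin k) 𝕜 E) (b' : OrthonormalBasis (Fin k) 𝕜 F) (σ : Fin k → ℝ),
      (∀ i, 0 ≤ σ i) ∧ ∀ i, S (b i) = (σ i : 𝕜) • b' i := by
  have hS := S.isSymmetric_adjoint_comp_self
  set b := hS.eigenvectorBasis hE with hb
  have horth (i j : Fin k) (hij : i ≠ j) : ⟪S (b i), S (b j)⟫_𝕜 = 0 := by
    rw [← LinearMap.adjoint_inner_right, ← LinearMap.comp_apply, hb, hS.apply_eigenvectorBasis,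
      inner_smul_right, OrthonormalBasis.inner_eq_zero _ hij, mul_zero]
  obtain ⟨b', hb'⟩ := Orthonormal.exists_orthonormalBasis_extension_of_card_eq
    (v := fun i => (‖S (b i)‖⁻¹ : 𝕜) • S (b i)) (s := {i | S (b i) ≠ 0})
    (hF.trans (Fintype.card_fin k).symm)
    ⟨fun i => norm_smul_inv_norm i.2, fun i j hij => by
      simp [inner_smul_left, inner_smul_right, horth i j (Subtype.coe_ne_coe.2 hij)]⟩
  refine ⟨b, b', fun i => ‖S (b i)‖, fun i => norm_nonneg _, fun i => ?_⟩
  by_cases hi : S (b i) = 0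
  · simp [hi]
  · rw [hb' i hi, smul_inv_smul₀ (by simpa)]

theorem exists_orthonormalBasis_starProjection_eq_smul {k : ℕ} {V W : Submodule 𝕜 E}
    [FiniteDimensional 𝕜 V] [FiniteDimensional 𝕜 W] (hV : finrank 𝕜 V = k)
    (hW : finrank 𝕜 W = k) :
    ∃ (v : OrthonormalBasis (Fin k) 𝕜 V) (w : OrthonormalBasis (Fin k) 𝕜 W) (c : Fin k → ℝ),
      (∀ i, 0 ≤ c i) ∧ ∀ i, V.starProjection (w i : E) = (c i : 𝕜) • (v i : E) := by
  obtain ⟨w, v, c, hc, hwv⟩ := exists_orthonormalBasis_map_eq_smul hW hV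
    (V.orthogonalProjectionOnto.toLinearMap ∘ₗ W.subtype)
  exact ⟨v, w, c, hc, fun i => congrArg Subtype.val (hwv i)⟩

/-- The real part of the trace of `T` composed with the orthogonal projection onto `V`: the
functional `V ↦ tr (T P_V)` that is maximized over the Grassmannian. -/
noncomputable def projTrace (T : E →L[𝕜] E) (V : Submodule 𝕜 E) [V.HasOrthogonalProjection] : ℝ :=
  re (LinearMap.trace 𝕜 E (T ∘L V.starProjection : E →L[𝕜] E))

theorem starProjection_span_range [Fintype ι] {z : ι → E}
    [(span 𝕜 (Set.range z)).HasOrthogonalProjection] (hz : ∀ i, z i ≠ 0)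
    (horth : Pairwise fun i j => ⟪z i, z j⟫_𝕜 = 0) :
    (span 𝕜 (Set.range z)).starProjection =
      ∑ i, ((‖z i‖ ^ 2 : ℝ) : 𝕜)⁻¹ • rankOne 𝕜 (z i) (z i) := by
  classical
  ext x
  refine eq_starProjection_of_mem_orthogonal ?_ ?_
  · simp only [_root_.sum_apply, _root_.smul_apply, rankOne_apply]
    exact sum_mem fun i _ => smul_mem _ _ <| smul_mem _ _ <| subset_span ⟨i, rfl⟩
  · rw [← span_singleton_le_iff_mem, le_orthogonal_iff_le_orthogonal, span_le]
    rintro _ ⟨j, rfl⟩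
    rw [SetLike.mem_coe, mem_orthogonal_singleton_iff_inner_left]
    have : (‖z j‖ : 𝕜) ≠ 0 := by simpa using hz j
    simp only [_root_.sum_apply, _root_.smul_apply, rankOne_apply, inner_sub_right, inner_sum,
      inner_smul_right, ofReal_pow]
    rw [Finset.sum_eq_single j (fun i _ hij => by rw [horth hij.symm, mul_zero, mul_zero])
      (by simp), inner_self_eq_norm_sq_to_K]
    field_simp
    rw [sub_self, mul_zero]

theorem projTrace_span_range [FiniteDimensional 𝕜 E] (T : E →L[𝕜] E) [Fintype ι] {z : ι → E}
    (hz : ∀ i, z i ≠ 0) (horth : Pairwise fun i j => ⟪z i, z j⟫_𝕜 = 0) :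
    projTrace T (span 𝕜 (Set.range z)) = ∑ i, T.rayleighQuotient (z i) := by
  simp only [projTrace, starProjection_span_range hz horth, ContinuousLinearMap.comp_finsetSum,
    ContinuousLinearMap.comp_smul, comp_rankOne, ContinuousLinearMap.toLinearMap_sum, map_sum,
    ContinuousLinearMap.toLinearMap_smul, map_smul, trace_rankOne]
  refine Finset.sum_congr rfl fun i _ => ?_
  rw [smul_eq_mul, ← ofReal_inv, re_ofReal_mul, inner_re_symm,
    ← ContinuousLinearMap.reApplyInnerSelf_apply, ← div_eq_inv_mul]

theorem continuous_starProjection_span_range {X : Type*} [TopologicalSpace X] [Finite ι]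
    {z : X → ι → E} [∀ t, (span 𝕜 (Set.range (z t))).HasOrthogonalProjection]
    (hc : ∀ i, Continuous fun t => z t i) (hz : ∀ t i, z t i ≠ 0)
    (horth : ∀ t, Pairwise fun i j => ⟪z t i, z t j⟫_𝕜 = 0) :
    Continuous fun t => (span 𝕜 (Set.range (z t))).starProjection := by
  cases nonempty_fintype ι
  simp only [starProjection_span_range (hz _) (horth _), rankOne_def]
  fun_prop (disch := simp [hz])

/-- A subspace `V` is dominant for `T` if `V` and `Vᗮ` are orthogonal for the form `re ⟪T x, x⟫` and
every Rayleigh quotient on `V` is at least every Rayleigh quotient on `Vᗮ`; for self-adjoint `T`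
these are the invariant subspaces carrying the largest eigenvalues. The comparison of Rayleigh
quotients is multiplied out, so that it needs no nonvanishing hypotheses. -/
structure IsDominant (T : E →L[𝕜] E) (V : Submodule 𝕜 E) : Prop where
  reApplyInnerSelf_add : ∀ x ∈ V, ∀ y ∈ Vᗮ,
    T.reApplyInnerSelf (x + y) = T.reApplyInnerSelf x + T.reApplyInnerSelf y
  reApplyInnerSelf_mul_le : ∀ x ∈ V, ∀ y ∈ Vᗮ,
    T.reApplyInnerSelf y * ‖x‖ ^ 2 ≤ T.reApplyInnerSelf x * ‖y‖ ^ 2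

theorem isDominant_span_image [Fintype ι] {T : E →L[𝕜] E} (b : OrthonormalBasis ι 𝕜 E)
    {l : ι → ℝ} (hT : ∀ x, T.reApplyInnerSelf x = ∑ i, l i * ‖⟪b i, x⟫_𝕜‖ ^ 2)
    {s : Set ι} (hs : ∀ i ∈ s, ∀ j ∉ s, l j ≤ l i) : IsDominant T (span 𝕜 (b '' s)) := by
  have hin (x : E) (hx : x ∈ span 𝕜 (b '' s)) (i : ι) (hi : i ∉ s) : ⟪b i, x⟫_𝕜 = 0 := by
    refine (isOrtho_span.2 ?_).inner_eq (mem_span_singleton_self (b i)) hx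
    rintro _ rfl _ ⟨j, hj, rfl⟩
    exact b.inner_eq_zero fun hij => hi (hij ▸ hj)
  have hout (y : E) (hy : y ∈ (span 𝕜 (b '' s))ᗮ) (i : ι) (hi : i ∈ s) : ⟪b i, y⟫_𝕜 = 0 :=
    (mem_orthogonal _ _).1 hy _ (subset_span ⟨i, hi, rfl⟩)
  constructor <;> intro x hx y hy
  · simp only [hT, ← Finset.sum_add_distrib]
    refine Finset.sum_congr rfl fun i _ => ?_
    by_cases hi : i ∈ s
    · simp [inner_add_right, hout y hy i hi]
    · simp [inner_add_right, hin x hx i hi]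
  · rw [hT, hT, ← b.sum_sq_norm_inner_right x, ← b.sum_sq_norm_inner_right y,
      Finset.sum_mul_sum, Finset.sum_mul_sum, Finset.sum_comm]
    refine Finset.sum_le_sum fun i _ => Finset.sum_le_sum fun j _ => ?_
    by_cases hi : i ∈ s
    · by_cases hj : j ∈ s
      · simp [hout y hy j hj]
      · nlinarith [hs i hi j hj, mul_nonneg (sq_nonneg ‖⟪b i, x⟫_𝕜‖) (sq_nonneg ‖⟪b j, y⟫_𝕜‖)]
    · simp [hin x hx i hi]

variable [FiniteDimensional 𝕜 E]

theorem exists_reApplyInnerSelf_eq_sum (T : E →L[𝕜] E) {n : ℕ} (hn : finrank 𝕜 E = n) :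
    ∃ (b : OrthonormalBasis (Fin n) 𝕜 E) (l : Fin n → ℝ), Antitone l ∧
      ∀ x, T.reApplyInnerSelf x = ∑ i, l i * ‖⟪b i, x⟫_𝕜‖ ^ 2 := by
  have : CompleteSpace E := FiniteDimensional.complete 𝕜 E
  set S : E →L[𝕜] E := T + star T
  have hS : (S : E →ₗ[𝕜] E).IsSymmetric := (IsSelfAdjoint.add_star_self T).isSymmetric
  set b := hS.eigenvectorBasis hn
  set μ := hS.eigenvalues hn
  have hST (x : E) : re ⟪x, S x⟫_𝕜 = 2 * T.reApplyInnerSelf x := by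
    rw [_root_.add_apply, ContinuousLinearMap.star_eq_adjoint, inner_add_right,
      ContinuousLinearMap.adjoint_inner_right, map_add, inner_re_symm x (T x),
      ContinuousLinearMap.reApplyInnerSelf_apply, two_mul]
  have hbS (x : E) (i : Fin n) : ⟪b i, S x⟫_𝕜 = μ i * ⟪b i, x⟫_𝕜 := by
    rw [← b.repr_apply_apply, ← b.repr_apply_apply]
    exact hS.eigenvectorBasis_apply_self_apply hn x i
  refine ⟨b, fun i => μ i / 2, fun i j hij =>
    div_le_div_of_nonneg_right (hS.eigenvalues_antitone hn hij) zero_le_two, fun x => ?_⟩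
  have hsum : re ⟪x, S x⟫_𝕜 = ∑ i, μ i * ‖⟪b i, x⟫_𝕜‖ ^ 2 := by
    rw [← b.sum_inner_mul_inner, map_sum]
    refine Finset.sum_congr rfl fun i _ => ?_
    rw [hbS, mul_left_comm, re_ofReal_mul, ← inner_conj_symm x, RCLike.conj_mul, ← ofReal_pow,
      ofReal_re]
  simp only [div_mul_eq_mul_div, ← Finset.sum_div, ← hsum, hST]
  ring

theorem exists_isDominant (T : E →L[𝕜] E) {k : ℕ} (hk : k ≤ finrank 𝕜 E) :
    ∃ V : Submodule 𝕜 E, IsDominant T V ∧ finrank 𝕜 V = k := by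
  obtain ⟨b, l, hl, hT⟩ := exists_reApplyInnerSelf_eq_sum T rfl
  refine ⟨_, isDominant_span_image b hT (s := Set.range (Fin.castLE hk)) ?_, ?_⟩
  · rintro _ ⟨i, rfl⟩ j hj
    rw [Fin.range_castLE, Set.mem_ofPred, not_lt] at hj
    exact hl (i.is_lt.le.trans hj)
  · rw [← Set.range_comp, finrank_span_eq_card, Fintype.card_fin]
    exact b.toBasis.linearIndependent.comp _ (Fin.castLE_injective hk)

end InnerProductSpace

section LineMap

variable {𝕜 E : Type*} [RCLike 𝕜] [NormedAddCommGroup E] [InnerProductSpace 𝕜 E]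

theorem segment_quotient_denom_pos {c : ℝ} (hc0 : 0 ≤ c) (hc1 : c ≤ 1) (t : ℝ) :
    0 < ((1 - t) * c + t) ^ 2 + (1 - t) ^ 2 * (1 - c ^ 2) := by
  nlinarith [sq_nonneg (2 * t - 1)]

/- The quotient is the Rayleigh quotient at `(1 - t) • w + t • v` for unit vectors with
`P_V w = c • v`: that point has coefficient `(1 - t) * c + t` on `v` and `1 - t` on `w - P_V w`, and
`a`, `b` are the values of the quadratic form at `v` and at `w - P_V w`. -/
theorem monotoneOn_segment_quotient {a b c : ℝ} (hc0 : 0 ≤ c) (hc1 : c ≤ 1)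
    (hab : b ≤ a * (1 - c ^ 2)) :
    MonotoneOn (fun t : ℝ => (((1 - t) * c + t) ^ 2 * a + (1 - t) ^ 2 * b) /
      (((1 - t) * c + t) ^ 2 + (1 - t) ^ 2 * (1 - c ^ 2))) (Icc 0 1) := by
  rintro s ⟨hs0, hs1⟩ t ⟨-, ht1⟩ hst
  have hcross : ((1 - s) * c + s) * (1 - t) ≤ ((1 - t) * c + t) * (1 - s) := by linarith
  have hsq : (((1 - s) * c + s) * (1 - t)) ^ 2 ≤ (((1 - t) * c + t) * (1 - s)) ^ 2 := by
    have : 0 ≤ 1 - s := by linarith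
    have : 0 ≤ 1 - t := by linarith
    gcongr
  rw [div_le_div_iff₀ (segment_quotient_denom_pos hc0 hc1 s) (segment_quotient_denom_pos hc0 hc1 t)]
  linear_combination mul_le_mul_of_nonneg_left hsq (sub_nonneg.2 hab)

variable {V : Submodule 𝕜 E} [V.HasOrthogonalProjection] {v w : E} {c : ℝ}

theorem lineMap_eq_smul_add_smul_sub_starProjection (hvw : V.starProjection w = (c : 𝕜) • v)
    (t : ℝ) :
    lineMap w v (t : 𝕜) = (((1 - t) * c + t : ℝ) : 𝕜) • v +
      ((1 - t : ℝ) : 𝕜) • (w - V.starProjection w) := by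
  rw [AffineMap.lineMap_apply_module, hvw]
  push_cast
  module

theorem norm_sub_starProjection_sq (hv : ‖v‖ = 1) (hw : ‖w‖ = 1)
    (hvw : V.starProjection w = (c : 𝕜) • v) : ‖w - V.starProjection w‖ ^ 2 = 1 - c ^ 2 := by
  have h := V.norm_sq_eq_add_norm_sq_starProjection w
  rw [starProjection_orthogonal_val, hw, hvw, norm_smul, norm_ofReal, hv, mul_one, sq_abs] at h
  rw [hvw]
  linarith

theorem norm_lineMap_sq (hvV : v ∈ V) (hv : ‖v‖ = 1) (hw : ‖w‖ = 1)
    (hvw : V.starProjection w = (c : 𝕜) • v) (t : ℝ) :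
    ‖lineMap w v (t : 𝕜)‖ ^ 2 = ((1 - t) * c + t) ^ 2 + (1 - t) ^ 2 * (1 - c ^ 2) := by
  have h := inner_right_of_mem_orthogonal (K := V) (smul_mem _ (((1 - t) * c + t : ℝ) : 𝕜) hvV)
    (smul_mem _ ((1 - t : ℝ) : 𝕜) (sub_starProjection_mem_orthogonal w))
  rw [lineMap_eq_smul_add_smul_sub_starProjection hvw, sq,
    norm_add_sq_eq_norm_sq_add_norm_sq_of_inner_eq_zero _ _ h, ← sq, ← sq, norm_smul, norm_smul,
    mul_pow, mul_pow, norm_sub_starProjection_sq hv hw hvw, norm_ofReal, norm_ofReal, sq_abs,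
    sq_abs, hv, one_pow, mul_one]

theorem le_one_of_starProjection_eq_smul (hv : ‖v‖ = 1) (hw : ‖w‖ = 1)
    (hvw : V.starProjection w = (c : 𝕜) • v) : c ≤ 1 := by
  nlinarith [norm_sub_starProjection_sq hv hw hvw, sq_nonneg ‖w - V.starProjection w‖]

theorem lineMap_ne_zero_of_starProjection_eq_smul (hvV : v ∈ V) (hv : ‖v‖ = 1) (hw : ‖w‖ = 1)
    (hc : 0 ≤ c) (hvw : V.starProjection w = (c : 𝕜) • v) (t : ℝ) : lineMap w v (t : 𝕜) ≠ 0 := by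
  rw [← norm_ne_zero_iff, ← pow_ne_zero_iff two_ne_zero, norm_lineMap_sq hvV hv hw hvw]
  exact (segment_quotient_denom_pos hc (le_one_of_starProjection_eq_smul hv hw hvw) t).ne'

theorem IsDominant.monotoneOn_rayleighQuotient_lineMap {T : E →L[𝕜] E} (hT : IsDominant T V)
    (hvV : v ∈ V) (hv : ‖v‖ = 1) (hw : ‖w‖ = 1) (hc : 0 ≤ c)
    (hvw : V.starProjection w = (c : 𝕜) • v) :
    MonotoneOn (fun t : ℝ => T.rayleighQuotient (lineMap w v (t : 𝕜))) (Icc 0 1) := by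
  have hd : w - V.starProjection w ∈ Vᗮ := sub_starProjection_mem_orthogonal w
  have hle : T.reApplyInnerSelf (w - V.starProjection w) ≤ T.reApplyInnerSelf v * (1 - c ^ 2) := by
    simpa [hv, norm_sub_starProjection_sq hv hw hvw] using hT.reApplyInnerSelf_mul_le v hvV _ hd
  convert monotoneOn_segment_quotient hc (le_one_of_starProjection_eq_smul hv hw hvw) hle using 2
    with t
  rw [ContinuousLinearMap.rayleighQuotient, norm_lineMap_sq hvV hv hw hvw,
    lineMap_eq_smul_add_smul_sub_starProjection hvw,
    hT.reApplyInnerSelf_add _ (smul_mem _ _ hvV) _ (smul_mem _ _ hd),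
    T.reApplyInnerSelf_smul, T.reApplyInnerSelf_smul, norm_ofReal, norm_ofReal, sq_abs, sq_abs]

end LineMap

section Path

variable {𝕜 E : Type*} [RCLike 𝕜] [NormedAddCommGroup E] [InnerProductSpace 𝕜 E]

theorem pairwise_inner_lineMap_eq_zero {ι : Type*} {V : Submodule 𝕜 E} [V.HasOrthogonalProjection]
    {v w : ι → E} (hvV : ∀ i, v i ∈ V) (hv : Pairwise fun i j => ⟪v i, v j⟫_𝕜 = 0)
    (hw : Pairwise fun i j => ⟪w i, w j⟫_𝕜 = 0) {c : ι → 𝕜}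
    (hvw : ∀ i, V.starProjection (w i) = c i • v i) (t : 𝕜) :
    Pairwise fun i j => ⟪lineMap (w i) (v i) t, lineMap (w j) (v j) t⟫_𝕜 = 0 := by
  have hcross (i j : ι) (hij : i ≠ j) : ⟪v i, w j⟫_𝕜 = 0 := by
    rw [← starProjection_eq_self_iff.2 (hvV i), inner_starProjection_left_eq_right, hvw,
      inner_smul_right, hv hij, mul_zero]
  intro i j hij
  simp [AffineMap.lineMap_apply_module, inner_add_left, inner_add_right, inner_smul_left,
    inner_smul_right, hv hij, hw hij, hcross i j hij, inner_eq_zero_symm.1 (hcross j i hij.symm)]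

theorem span_range_coe_orthonormalBasis {ι : Type*} [Fintype ι] {V : Submodule 𝕜 E}
    (b : OrthonormalBasis ι 𝕜 V) : span 𝕜 (Set.range fun i => (b i : E)) = V := by
  have h := congrArg (Submodule.map V.subtype) b.toBasis.span_eq
  rwa [map_span, ← Set.range_comp, map_subtype_top, b.coe_toBasis] at h

variable [FiniteDimensional 𝕜 E] {T : E →L[𝕜] E} {V : Submodule 𝕜 E}

theorem IsDominant.exists_path (hT : IsDominant T V) {W : Submodule 𝕜 E}
    (hVW : finrank 𝕜 W = finrank 𝕜 V) :
    ∃ γ : ℝ → Submodule 𝕜 E, Continuous (fun t => (γ t).starProjection) ∧ γ 0 = W ∧ γ 1 = V ∧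
      (∀ t, finrank 𝕜 (γ t) = finrank 𝕜 W) ∧
      MonotoneOn (fun t => projTrace T (γ t)) (Icc 0 1) := by
  obtain ⟨v, w, c, hc, hvw⟩ := exists_orthonormalBasis_starProjection_eq_smul hVW.symm rfl
  have hv (i) : ‖(v i : E)‖ = 1 := v.norm_eq_one i
  have hw (i) : ‖(w i : E)‖ = 1 := w.norm_eq_one i
  have hne (t : ℝ) (i) : lineMap (w i : E) (v i : E) (t : 𝕜) ≠ 0 :=
    lineMap_ne_zero_of_starProjection_eq_smul (v i).2 (hv i) (hw i) (hc i) (hvw i) t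
  have horth (t : ℝ) := pairwise_inner_lineMap_eq_zero (fun i => (v i).2)
    (fun i j hij => v.inner_eq_zero hij) (fun i j hij => w.inner_eq_zero hij) hvw (t : 𝕜)
  refine ⟨fun t => span 𝕜 (Set.range fun i => lineMap (w i : E) (v i : E) (t : 𝕜)),
    continuous_starProjection_span_range (fun i => by fun_prop) hne horth, ?_, ?_, fun t => ?_, ?_⟩
  · simp only [ofReal_zero, AffineMap.lineMap_apply_zero, span_range_coe_orthonormalBasis]
  · simp only [ofReal_one, AffineMap.lineMap_apply_one, span_range_coe_orthonormalBasis]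
  · rw [finrank_span_eq_card (linearIndependent_of_ne_zero_of_inner_eq_zero (hne t) (horth t)),
      Fintype.card_fin]
  · simp only [projTrace_span_range T (hne _) (horth _)]
    exact fun s hs t ht hst => Finset.sum_le_sum fun i _ =>
      hT.monotoneOn_rayleighQuotient_lineMap (v i).2 (hv i) (hw i) (hc i) (hvw i) hs ht hst

theorem IsDominant.projTrace_le (hT : IsDominant T V) {W : Submodule 𝕜 E}
    (hVW : finrank 𝕜 W = finrank 𝕜 V) : projTrace T W ≤ projTrace T V := by
  obtain ⟨γ, -, rfl, rfl, -, hγ⟩ := hT.exists_path hVW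
  exact hγ (Set.left_mem_Icc.2 zero_le_one) (Set.right_mem_Icc.2 zero_le_one) zero_le_one

end Path

section Matrix

variable {𝕜 n : Type*} [RCLike 𝕜] [Fintype n] [DecidableEq n]

theorem trace_toEuclideanCLM (M : Matrix n n 𝕜) :
    LinearMap.trace 𝕜 (EuclideanSpace 𝕜 n) (toEuclideanCLM (n := n) (𝕜 := 𝕜) M) = M.trace := by
  rw [coe_toEuclideanCLM_eq_toEuclideanLin, toEuclideanLin_eq_toLin_orthonormal]
  exact Matrix.trace_toLin_eq _ _

theorem rank_eq_finrank_range_toEuclideanCLM (M : Matrix n n 𝕜) :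
    M.rank = finrank 𝕜 (toEuclideanCLM (n := n) (𝕜 := 𝕜) M).range := by
  rw [M.rank_eq_finrank_range_toLin (EuclideanSpace.basisFun n 𝕜).toBasis
    (EuclideanSpace.basisFun n 𝕜).toBasis, ← toEuclideanLin_eq_toLin_orthonormal]
  rfl

/-- The matrix, in the standard basis, of the orthogonal projection onto `W`: the embedding of the
Grassmannian into the space of matrices. -/
noncomputable def projMatrix (W : Submodule 𝕜 (EuclideanSpace 𝕜 n)) : Matrix n n 𝕜 :=
  (toEuclideanCLM (n := n) (𝕜 := 𝕜)).symm W.starProjection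

theorem toEuclideanCLM_projMatrix (W : Submodule 𝕜 (EuclideanSpace 𝕜 n)) :
    toEuclideanCLM (n := n) (𝕜 := 𝕜) (projMatrix W) = W.starProjection :=
  StarAlgEquiv.apply_symm_apply _ _

theorem isStarProjection_projMatrix (W : Submodule 𝕜 (EuclideanSpace 𝕜 n)) :
    IsStarProjection (projMatrix W) :=
  isStarProjection_starProjection.map (toEuclideanCLM (n := n) (𝕜 := 𝕜)).symm

theorem rank_projMatrix (W : Submodule 𝕜 (EuclideanSpace 𝕜 n)) :
    (projMatrix W).rank = finrank 𝕜 W := by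
  rw [rank_eq_finrank_range_toEuclideanCLM, toEuclideanCLM_projMatrix, range_starProjection]

theorem exists_eq_projMatrix {P : Matrix n n 𝕜} (hP : IsStarProjection P) :
    ∃ W : Submodule 𝕜 (EuclideanSpace 𝕜 n), P = projMatrix W := by
  obtain ⟨W, _, hW⟩ := isStarProjection_iff_eq_starProjection.1
    (hP.map (toEuclideanCLM (n := n) (𝕜 := 𝕜)))
  exact ⟨W, by rw [projMatrix, ← hW, StarAlgEquiv.symm_apply_apply]⟩

theorem re_trace_mul_projMatrix (A : Matrix n n 𝕜) (W : Submodule 𝕜 (EuclideanSpace 𝕜 n)) :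
    re (A * projMatrix W).trace = projTrace (toEuclideanCLM (n := n) (𝕜 := 𝕜) A) W := by
  rw [← trace_toEuclideanCLM, map_mul, toEuclideanCLM_projMatrix]
  rfl

theorem continuous_projMatrix_comp {X : Type*} [TopologicalSpace X]
    {γ : X → Submodule 𝕜 (EuclideanSpace 𝕜 n)} (hγ : Continuous fun t => (γ t).starProjection) :
    Continuous fun t => projMatrix (γ t) :=
  (LinearMap.continuous_of_finiteDimensional
    (toEuclideanCLM (n := n) (𝕜 := 𝕜)).symm.toAlgEquiv.toLinearMap).comp hγ

end Matrix

theorem stmt4_general {𝕜 n : Type*} [RCLike 𝕜] [Fintype n] (A P₀ : Matrix n n 𝕜)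
    (hP₀ : P₀.IsHermitian) (hP₀_idem : P₀ * P₀ = P₀) :
    ∃ P : ℝ → Matrix n n 𝕜, Continuous P ∧ P 0 = P₀ ∧
      (∀ t, (P t).IsHermitian ∧ P t * P t = P t ∧ (P t).rank = P₀.rank) ∧
      (∀ Q : Matrix n n 𝕜, Q.IsHermitian → Q * Q = Q → Q.rank = P₀.rank →
        re (A * Q).trace ≤ re (A * P 1).trace) ∧
      MonotoneOn (fun t => re (A * P t).trace) (Icc 0 1) := by
  classical
  obtain ⟨W, rfl⟩ := exists_eq_projMatrix ⟨hP₀_idem, hP₀⟩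
  obtain ⟨V, hV, hVW⟩ := exists_isDominant (toEuclideanCLM (n := n) (𝕜 := 𝕜) A) (finrank_le W)
  obtain ⟨γ, hγ, rfl, rfl, hrank, hmono⟩ := hV.exists_path hVW.symm
  refine ⟨fun t => projMatrix (γ t), continuous_projMatrix_comp hγ, rfl, fun t => ?_, ?_, ?_⟩
  · exact ⟨(isStarProjection_projMatrix _).isSelfAdjoint,
      (isStarProjection_projMatrix _).isIdempotentElem, by simp only [rank_projMatrix, hrank]⟩
  · intro Q hQ hQ_idem hQ_rank
    obtain ⟨U, rfl⟩ := exists_eq_projMatrix ⟨hQ_idem, hQ⟩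
    rw [rank_projMatrix, rank_projMatrix] at hQ_rank
    simpa only [re_trace_mul_projMatrix] using hV.projTrace_le (hQ_rank.trans hVW.symm)
  · simpa only [re_trace_mul_projMatrix] using hmono

/-- For a symmetric PSD matrix `A` and any rank-p orthogonal projection `P₀`
(t ↦ P_t a continuous curve of rank-p orthogonal projections), there is a
continuous path `P_t` of rank-p orthogonal projections with `P₀` as start,
`P₁` a maximizer of `V ↦ tr(A P_V)` over the Grassmannian, and
`t ↦ tr(A P_t)` non-decreasing on `[0,1]`. -/
theorem stmt4 (n p : ℕ) (hp : 1 ≤ p) (hpn : p ≤ n)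
    (A : Matrix (Fin n) (Fin n) ℝ) (hA : A.PosSemidef)
    (P0 : Matrix (Fin n) (Fin n) ℝ)
    (hP0symm : P0.IsSymm) (hP0idem : P0 * P0 = P0) (hP0rank : P0.rank = p) :
    ∃ P : ℝ → Matrix (Fin n) (Fin n) ℝ,
      Continuous P ∧ P 0 = P0 ∧
      (∀ t ∈ Set.Icc (0 : ℝ) 1, (P t).IsSymm ∧ P t * P t = P t ∧ (P t).rank = p) ∧
      (∀ Q : Matrix (Fin n) (Fin n) ℝ, Q.IsSymm → Q * Q = Q → Q.rank = p →
        (A * Q).trace ≤ (A * P 1).trace) ∧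
      (∀ s t : ℝ, s ∈ Set.Icc (0 : ℝ) 1 → t ∈ Set.Icc (0 : ℝ) 1 → s ≤ t →
        (A * P s).trace ≤ (A * P t).trace) := by
  subst hP0rank
  have h := stmt4_general A P0 (isHermitian_iff_isSymm.2 hP0symm) hP0idem
  simp only [isHermitian_iff_isSymm, re_to_real] at h
  obtain ⟨P, hcont, h0, hproj, hmax, hmono⟩ := h
  exact ⟨P, hcont, h0, fun t _ => hproj t, hmax, fun _ _ hs ht hst => hmono hs ht hst⟩
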